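/- For probability measures $P,Q$ on $\mathbb{R}^n$ let $d_{TV}(P,Q)=\sup_{A}|P(A)-Q(A)|$, the supremum over Borel sets $A\subseteq\mathbb{R}^n$, and for $v>0$ let $N(0,v)$ be the centered Gaussian on $\mathbb{R}$ with variance $v$. There exist universal constants $c, c' > 0$ such that for every $n \ge 1$ and every $\varepsilon \in (0,1)$ the following holds. Let $\mathcal{P}$ be the class of $n$-fold centered Gaussian product distributions on $\mathbb{R}^n$, i.e. product measures $\bigotimes_{i=1}^n N(0, v_i)$ with all $v_i > 0$. Any estimator, i.e. a measurable map taking $m$ i.i.d. samples from a distribution $P \in \mathcal{P}$ to a probability measure $\widehat{P}$ on $\mathbb{R}^n$ (measurable in the sense that $\widehat{P}(A)$ is a measurable function of the samples for every Borel set $A$), that satisfies, for every $P \in \mathcal{P}$, $\Pr( d_{TV}(P, \widehat{P}) \le c\,\varepsilon ) \ge 2/3$, must use at least $m \ge c' n/\varepsilon^2$ samples. -/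

import Mathlib

open MeasureTheory ProbabilityTheory
open scoped NNReal ENNReal

/-- Total variation distance between two probability measures: the supremum of
`|P A - Q A|` over measurable sets `A`. The family is bounded by `1` and non-empty, so the real
supremum is a genuine one. -/
noncomputable def dTV {α : Type*} [MeasurableSpace α] (P Q : ProbabilityMeasure α) : ℝ :=
  ⨆ A : {A : Set α // MeasurableSet A},
    |(P : Measure α).real A.1 - (Q : Measure α).real A.1|

/-- The centered Gaussian product distribution `⊗ᵢ N(0, vᵢ)` on `ℝⁿ`, with variances `vᵢ`. -/
noncomputable def gaussianProduct {n : ℕ} (v : Fin n → ℝ≥0) : ProbabilityMeasure (Fin n → ℝ) :=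
  ⟨Measure.pi fun i => gaussianReal 0 (v i), inferInstance⟩

/-- The joint law of `m` i.i.d. samples from `P`. -/
noncomputable def iidSamples {α : Type*} [MeasurableSpace α] (m : ℕ) (P : ProbabilityMeasure α) :
    Measure (Fin m → α) :=
  Measure.pi fun _ => (P : Measure α)

/-!
The lower bound is Assouad's argument on the hypercube of Gaussian products whose variances are `1`
or `1 + δ`, with `δ = ε / √n`. Flipping one bit changes the law of a single sample by a
`χ²`-divergence of order `δ²`; this tensorizes, so with `m ≪ 1 / δ² = n / ε²` samples neighbouring
hypotheses stay indistinguishable and every decoder misses a constant fraction of the bits.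

On the other hand two hypotheses at Hamming distance `h` are at total variation distance at least
of order `√h δ`: the test function is the imaginary part of a product `∏ᵢ (1 + i aᵢ(xᵢ))`, where
`aᵢ` is a small multiple of the cosine, centered under one of the two laws. Its modulus is bounded
because `∑ᵢ aᵢ²` is, while its mean under the other law is of the order of the sum of the means of
the `aᵢ`. Hence an estimator accurate to a small multiple of `ε` would decode most of the bits.
-/

section TotalVariation

variable {α Ω Θ : Type*} [MeasurableSpace α] [MeasurableSpace Ω] [MeasurableSpace Θ]

lemma abs_measureReal_sub_le_dTV (P Q : ProbabilityMeasure α) {A : Set α} (hA : MeasurableSet A) :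
    |(P : Measure α).real A - (Q : Measure α).real A| ≤ dTV P Q := by
  refine le_ciSup (f := fun A : {A : Set α // MeasurableSet A} =>
    |(P : Measure α).real A.1 - (Q : Measure α).real A.1|) ⟨1, ?_⟩ ⟨A, hA⟩
  rintro _ ⟨B, rfl⟩
  exact (abs_sub_le_of_le_of_le measureReal_nonneg measureReal_le_one measureReal_nonneg
    measureReal_le_one).trans_eq (sub_zero 1)

lemma integral_eq_add_integral_Ioc_measureReal_le (μ : Measure α) [IsProbabilityMeasure μ]
    {f : α → ℝ} (hf : Measurable f) {a b : ℝ} (ha : ∀ x, a ≤ f x) (hb : ∀ x, f x ≤ b) :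
    ∫ x, f x ∂μ = a + ∫ t in Set.Ioc 0 (b - a), μ.real {x | t ≤ f x - a} := by
  have hint : Integrable f μ :=
    Integrable.of_bound hf.aestronglyMeasurable (max |a| |b|)
      (ae_of_all _ fun x => abs_le_max_abs_abs (ha x) (hb x))
  have hlayer : ∫ x, (f x - a) ∂μ = ∫ t in Set.Ioc 0 (b - a), μ.real {x | t ≤ f x - a} :=
    (hint.sub (integrable_const a)).integral_eq_integral_Ioc_meas_le
      (ae_of_all _ fun x => sub_nonneg.2 (ha x)) (ae_of_all _ fun x => sub_le_sub_right (hb x) a)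
  rw [← hlayer, integral_sub hint (integrable_const a), integral_const, probReal_univ, one_smul,
    add_sub_cancel]

lemma integral_sub_integral_le_mul_dTV (P Q : ProbabilityMeasure α) {f : α → ℝ} (hf : Measurable f)
    {a b : ℝ} (ha : ∀ x, a ≤ f x) (hb : ∀ x, f x ≤ b) :
    ∫ x, f x ∂(P : Measure α) - ∫ x, f x ∂(Q : Measure α) ≤ (b - a) * dTV P Q := by
  obtain ⟨x₀⟩ : Nonempty α := (P : Measure α).nonempty_of_neZero
  have hab : a ≤ b := (ha x₀).trans (hb x₀)
  have htail (R : ProbabilityMeasure α) : IntegrableOn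
      (fun t => (R : Measure α).real {x | t ≤ f x - a}) (Set.Ioc 0 (b - a)) := by
    have hanti : Antitone fun t => (R : Measure α).real {x | t ≤ f x - a} :=
      fun s t hst => measureReal_mono fun x hx => hst.trans hx
    refine Integrable.of_bound hanti.measurable.aestronglyMeasurable 1 (ae_of_all _ fun t => ?_)
    rw [Real.norm_of_nonneg measureReal_nonneg]
    exact measureReal_le_one
  calc ∫ x, f x ∂(P : Measure α) - ∫ x, f x ∂(Q : Measure α)
      = ∫ t in Set.Ioc 0 (b - a), ((P : Measure α).real {x | t ≤ f x - a} -
          (Q : Measure α).real {x | t ≤ f x - a}) := by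
        rw [integral_sub (htail P) (htail Q),
          integral_eq_add_integral_Ioc_measureReal_le _ hf ha hb,
          integral_eq_add_integral_Ioc_measureReal_le _ hf ha hb, add_sub_add_left_eq_sub]
    _ ≤ ∫ _ in Set.Ioc 0 (b - a), dTV P Q := by
        refine integral_mono ((htail P).sub (htail Q)) (integrable_const _) fun t => ?_
        exact (le_abs_self _).trans (abs_measureReal_sub_le_dTV P Q
          (measurableSet_le measurable_const (hf.sub_const a)))
    _ = (b - a) * dTV P Q := by simp [hab]

lemma exists_measurableSet_dTV_le_imp (P Q : ProbabilityMeasure α) (r : ℝ) :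
    ∃ A, MeasurableSet A ∧
      (|(P : Measure α).real A - (Q : Measure α).real A| ≤ r → dTV P Q ≤ r) := by
  by_cases h : dTV P Q ≤ r
  · exact ⟨∅, MeasurableSet.empty, fun _ => h⟩
  · obtain ⟨⟨A, hA⟩, hlt⟩ := exists_lt_of_lt_ciSup (not_le.1 h)
    exact ⟨A, hA, fun hle => absurd hle hlt.not_ge⟩

lemma exists_measurable_selection [Finite Θ] [Nonempty Θ] {S : Θ → Set Ω}
    (hS : ∀ θ, MeasurableSet (S θ)) :
    ∃ g : Ω → Θ, Measurable g ∧ ∀ θ, ∀ x ∈ S θ, x ∈ S (g x) := by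
  classical
  let select (p : Θ → Prop) : Θ := if h : ∃ θ, p θ then h.choose else Classical.arbitrary Θ
  have hmem : Measurable fun x θ => x ∈ S θ :=
    measurable_pi_iff.2 fun θ => measurableSet_setOfPred.1 (hS θ)
  refine ⟨fun x => select fun θ => x ∈ S θ,
    fun s _ => hmem (Set.toFinite (select ⁻¹' s)).measurableSet, fun θ x hx => ?_⟩
  have h : ∃ θ, x ∈ S θ := ⟨θ, hx⟩
  simpa only [select, dif_pos h] using h.choose_spec

-- Comparing measures only on finitely many separating sets keeps the decoder measurable without
-- knowing that `x ↦ dTV P (e x)` is.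
lemma exists_measurable_decoder [Finite Θ] [Nonempty Θ] (P : Θ → ProbabilityMeasure α)
    {e : Ω → ProbabilityMeasure α} (he : Measurable e) (r : ℝ) :
    ∃ g : Ω → Θ, Measurable g ∧
      ∀ θ x, dTV (P θ) (e x) ≤ r → dTV (P θ) (P (g x)) ≤ 2 * r := by
  choose A hA hsep using fun θ θ' => exists_measurableSet_dTV_le_imp (P θ) (P θ') (2 * r)
  let S (θ : Θ) : Set Ω :=
    {x | ∀ q q', |(P θ : Measure α).real (A q q') - (e x : Measure α).real (A q q')| ≤ r}
  have hS (θ) : MeasurableSet (S θ) := by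
    simp only [S, Set.ofPred_forall]
    refine MeasurableSet.iInter fun q => MeasurableSet.iInter fun q' => ?_
    have heA : Measurable fun x => (e x : Measure α).real (A q q') :=
      ((Measure.measurable_coe (hA q q')).comp (measurable_subtype_coe.comp he)).ennreal_toReal
    exact measurableSet_le (heA.const_sub _).abs measurable_const
  obtain ⟨g, hg, hgS⟩ := exists_measurable_selection hS
  refine ⟨g, hg, fun θ x hx => hsep θ (g x) ?_⟩
  have hxS : x ∈ S θ := fun q q' => (abs_measureReal_sub_le_dTV _ _ (hA q q')).trans hx
  have hθ := hxS θ (g x)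
  have hg := hgS θ x hxS θ (g x)
  rw [abs_sub_comm] at hg
  linarith [abs_sub_le ((P θ : Measure α).real (A θ (g x)))
    ((e x : Measure α).real (A θ (g x))) ((P (g x) : Measure α).real (A θ (g x)))]

end TotalVariation

section RieszProduct

variable {ι : Type*} {E : ι → Type*}

lemma prod_one_add_mul_I_bounds (s : Finset ι) {β : ι → ℝ} (hβ : ∀ i ∈ s, 0 ≤ β i)
    (hsum : ∑ i ∈ s, β i ≤ 1) :
    (∑ i ∈ s, β i) / 2 ≤ (∏ i ∈ s, (1 + β i * Complex.I)).im ∧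
      (∏ i ∈ s, (1 + β i * Complex.I)).im ≤ ∑ i ∈ s, β i ∧
      1 - (∑ i ∈ s, β i) ^ 2 / 2 ≤ (∏ i ∈ s, (1 + β i * Complex.I)).re ∧
      (∏ i ∈ s, (1 + β i * Complex.I)).re ≤ 1 := by
  induction s using Finset.cons_induction with
  | empty => simp
  | cons j s hj ih =>
    rw [Finset.forall_mem_cons] at hβ
    rw [Finset.sum_cons] at hsum ⊢
    obtain ⟨hβj, hβs⟩ := hβ
    have hsum0 : 0 ≤ ∑ i ∈ s, β i := Finset.sum_nonneg hβs
    obtain ⟨him_ge, him_le, hre_ge, hre_le⟩ := ih hβs (by linarith)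
    rw [Finset.prod_cons]
    generalize ∏ i ∈ s, (1 + (β i : ℂ) * Complex.I) = z at *
    have hre : ((1 + β j * Complex.I) * z).re = z.re - β j * z.im := by simp
    have him : ((1 + β j * Complex.I) * z).im = z.im + β j * z.re := by simp
    have hhalf : 1 / 2 ≤ z.re := by nlinarith
    rw [hre, him]
    refine ⟨by nlinarith, by nlinarith, by nlinarith, by nlinarith⟩

variable [Fintype ι]

/-- The Riesz-type product `∏ᵢ (1 + i aᵢ(xᵢ))`. It is bounded as soon as `∑ᵢ ‖aᵢ‖∞²` is, and its
mean under a product measure depends on the means of the `aᵢ` only. -/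
noncomputable def rieszProduct (a : ∀ i, E i → ℝ) (x : ∀ i, E i) : ℂ :=
  ∏ i, (1 + a i (x i) * Complex.I)

lemma norm_rieszProduct_le {a : ∀ i, E i → ℝ} {B : ι → ℝ} (hB : ∀ i x, |a i x| ≤ B i)
    (hB1 : ∑ i, B i ^ 2 ≤ 1) (x : ∀ i, E i) : ‖rieszProduct a x‖ ≤ 2 := by
  refine abs_le_of_sq_le_sq' ?_ zero_le_two |>.2
  calc ‖rieszProduct a x‖ ^ 2 = ∏ i, (1 + a i (x i) ^ 2) := by
        simp only [rieszProduct, norm_prod, ← Finset.prod_pow, Complex.sq_norm,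
          ← Complex.ofReal_one, Complex.normSq_add_mul_I, one_pow]
    _ ≤ ∏ i, (1 + B i ^ 2) := by
        gcongr ∏ i, (1 + ?_) with i
        exact sq_le_sq' (abs_le.1 (hB i (x i))).1 (abs_le.1 (hB i (x i))).2
    _ ≤ Real.exp (∑ i, B i ^ 2) := Real.prod_one_add_le_exp_sum _ fun i => sq_nonneg (B i)
    _ ≤ Real.exp 1 := Real.exp_le_exp.2 hB1
    _ ≤ 2 ^ 2 := by linarith [Real.exp_one_lt_d9]

variable [∀ i, MeasurableSpace (E i)]

lemma measurable_rieszProduct {a : ∀ i, E i → ℝ} (ha : ∀ i, Measurable (a i)) :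
    Measurable (rieszProduct a) := by
  unfold rieszProduct
  fun_prop

lemma integral_rieszProduct (μ : ∀ i, Measure (E i)) [∀ i, IsProbabilityMeasure (μ i)]
    {a : ∀ i, E i → ℝ} (ha : ∀ i, Integrable (a i) (μ i)) :
    ∫ x, rieszProduct a x ∂Measure.pi μ = ∏ i, (1 + (∫ y, a i y ∂μ i : ℝ) * Complex.I) := by
  simp only [rieszProduct]
  rw [integral_fintype_prod_eq_prod fun i (y : E i) => 1 + (a i y : ℂ) * Complex.I]
  refine Finset.prod_congr rfl fun i _ => ?_
  rw [integral_add (integrable_const _) ((ha i).ofReal.mul_const _), integral_mul_const,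
    integral_complex_ofReal, integral_const, probReal_univ, one_smul]

lemma sum_integral_le_dTV_pi (μ ν : ∀ i, ProbabilityMeasure (E i)) {a : ∀ i, E i → ℝ}
    (ha : ∀ i, Measurable (a i)) {B : ι → ℝ} (hB : ∀ i x, |a i x| ≤ B i) (hB1 : ∑ i, B i ^ 2 ≤ 1)
    {β : ι → ℝ} (hβ : ∀ i, 0 ≤ β i) (hβ1 : ∑ i, β i ≤ 1)
    (hμ : ∀ i, ∫ x, a i x ∂(μ i : Measure (E i)) = β i)
    (hν : ∀ i, ∫ x, a i x ∂(ν i : Measure (E i)) = 0) :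
    ∑ i, β i ≤ 8 * dTV (ProbabilityMeasure.pi μ) (ProbabilityMeasure.pi ν) := by
  have hF := measurable_rieszProduct ha
  have hnorm := norm_rieszProduct_le hB hB1
  have hmean (R : ∀ i, ProbabilityMeasure (E i)) :
      ∫ x, (rieszProduct a x).im ∂(ProbabilityMeasure.pi R : Measure (∀ i, E i)) =
        (∏ i, (1 + (∫ y, a i y ∂(R i : Measure (E i)) : ℝ) * Complex.I)).im := by
    rw [ProbabilityMeasure.toMeasure_pi, ← integral_rieszProduct _ fun i =>
      Integrable.of_bound (ha i).aestronglyMeasurable (B i) (ae_of_all _ (hB i))]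
    exact integral_im (𝕜 := ℂ)
      (Integrable.of_bound hF.aestronglyMeasurable 2 (ae_of_all _ hnorm))
  have him (x) := abs_le.1 ((Complex.abs_im_le_norm (rieszProduct a x)).trans (hnorm x))
  have htest := integral_sub_integral_le_mul_dTV (ProbabilityMeasure.pi μ)
    (ProbabilityMeasure.pi ν) (Complex.measurable_im.comp hF) (fun x => (him x).1)
    (fun x => (him x).2)
  simp only [Function.comp_apply, hmean, hμ, hν, Complex.ofReal_zero, zero_mul, add_zero,
    Finset.prod_const_one, Complex.one_im] at htest
  linarith [(prod_one_add_mul_I_bounds Finset.univ (fun i _ => hβ i) hβ1).1]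

lemma sum_mul_sub_le_dTV_pi (μ ν : ∀ i, ProbabilityMeasure (E i)) {f : ∀ i, E i → ℝ}
    (hf : ∀ i, Measurable (f i)) (hf1 : ∀ i x, |f i x| ≤ 1) {p q : ι → ℝ}
    (hμ : ∀ i, ∫ x, f i x ∂(μ i : Measure (E i)) = p i)
    (hν : ∀ i, ∫ x, f i x ∂(ν i : Measure (E i)) = q i)
    {t : ι → ℝ} (ht : ∑ i, (2 * t i) ^ 2 ≤ 1)
    (htd : ∀ i, 0 ≤ t i * (p i - q i)) (htd1 : ∑ i, t i * (p i - q i) ≤ 1) :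
    ∑ i, t i * (p i - q i) ≤ 8 * dTV (ProbabilityMeasure.pi μ) (ProbabilityMeasure.pi ν) := by
  have hmean (R : ∀ i, ProbabilityMeasure (E i)) (i) :
      ∫ x, t i * (f i x - q i) ∂(R i : Measure (E i)) =
        t i * (∫ x, f i x ∂(R i : Measure (E i)) - q i) := by
    rw [integral_const_mul, integral_sub (Integrable.of_bound (hf i).aestronglyMeasurable 1
      (ae_of_all _ (hf1 i))) (integrable_const _), integral_const, probReal_univ, one_smul]
  have hq (i) : |q i| ≤ 1 := by
    rw [← hν i]
    simpa using norm_integral_le_of_norm_le_const (f := f i)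
      (ae_of_all (ν i : Measure (E i)) (hf1 i))
  refine sum_integral_le_dTV_pi μ ν (a := fun i x => t i * (f i x - q i)) (B := fun i => 2 * |t i|)
    (fun i => ((hf i).sub_const _).const_mul _) (fun i x => ?_)
    (by simpa only [mul_pow, sq_abs] using ht) htd htd1 (fun i => by rw [hmean, hμ])
    (fun i => by rw [hmean, hν, sub_self, mul_zero])
  rw [abs_mul, mul_comm 2]
  gcongr
  linarith [abs_sub (f i x) (q i), hf1 i x, hq i]

lemma min_sqrt_sum_sq_sub_le_dTV_pi (μ ν : ∀ i, ProbabilityMeasure (E i)) {f : ∀ i, E i → ℝ}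
    (hf : ∀ i, Measurable (f i)) (hf1 : ∀ i x, |f i x| ≤ 1) {p q : ι → ℝ}
    (hμ : ∀ i, ∫ x, f i x ∂(μ i : Measure (E i)) = p i)
    (hν : ∀ i, ∫ x, f i x ∂(ν i : Measure (E i)) = q i) :
    min 1 (√(∑ i, (p i - q i) ^ 2) / 2) ≤
      8 * dTV (ProbabilityMeasure.pi μ) (ProbabilityMeasure.pi ν) := by
  set r : ℝ := √(∑ i, (p i - q i) ^ 2)
  have hr0 : 0 ≤ r := Real.sqrt_nonneg _
  have hr2 : ∑ i, (p i - q i) ^ 2 = r ^ 2 := (Real.sq_sqrt (by positivity)).symm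
  -- The weights point along `p - q`, at the largest scale `sum_mul_sub_le_dTV_pi` permits.
  let s : ℝ := min 1 (r / 2) / r ^ 2
  have hsum : ∑ i, s * (p i - q i) * (p i - q i) = min 1 (r / 2) := by
    simp only [mul_assoc, ← sq, ← Finset.mul_sum, hr2]
    exact div_mul_cancel_of_imp fun h => by simp [pow_eq_zero_iff two_ne_zero |>.1 h]
  have hsr : 2 * s * r ≤ 1 := by
    obtain h | h := hr0.eq_or_lt
    · simp [← h]
    · calc 2 * s * r = 2 * min 1 (r / 2) / r := by simp only [s]; field_simp
        _ ≤ 1 := (div_le_one h).2 (by linarith [min_le_right 1 (r / 2)])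
  rw [← hsum]
  refine sum_mul_sub_le_dTV_pi μ ν hf hf1 hμ hν ?_ (fun i => ?_) (hsum.trans_le (min_le_left _ _))
  · calc ∑ i, (2 * (s * (p i - q i))) ^ 2 = (2 * s * r) ^ 2 := by
          simp only [← mul_assoc, mul_pow _ (p _ - q _), ← Finset.mul_sum, hr2, mul_pow _ r]
      _ ≤ 1 := pow_le_one₀ (by positivity) hsr
  · rw [mul_assoc]
    exact mul_nonneg (by positivity) (mul_self_nonneg _)

end RieszProduct

section GaussianTotalVariation

lemma integral_cos_gaussianReal (v : ℝ≥0) :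
    ∫ x, Real.cos x ∂gaussianReal 0 v = Real.exp (-v / 2) := by
  have hint : Integrable (fun x : ℝ => Complex.exp (x * Complex.I)) (gaussianReal 0 v) :=
    Integrable.of_bound (by fun_prop) 1
      (ae_of_all _ fun x => (Complex.norm_exp_ofReal_mul_I x).le)
  have hchar := charFun_gaussianReal (μ := 0) (v := v) 1
  rw [charFun_apply_real] at hchar
  calc ∫ x, Real.cos x ∂gaussianReal 0 v
      = ∫ x : ℝ, (Complex.exp (x * Complex.I)).re ∂gaussianReal 0 v := by
        simp only [Complex.exp_ofReal_mul_I_re]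
    _ = (∫ x : ℝ, Complex.exp (x * Complex.I) ∂gaussianReal 0 v).re :=
        integral_re (𝕜 := ℂ) hint
    _ = (Complex.exp ((-v / 2 : ℝ) : ℂ)).re := by
        simp only [Complex.ofReal_one, one_mul] at hchar
        rw [hchar]
        push_cast
        ring_nf
    _ = Real.exp (-v / 2) := Complex.exp_ofReal_re _

lemma exp_mul_abs_sub_le_abs_exp_sub_exp {a x y : ℝ} (hx : a ≤ x) (hy : a ≤ y) :
    Real.exp a * |x - y| ≤ |Real.exp x - Real.exp y| := by
  wlog hyx : y ≤ x generalizing x y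
  · rw [abs_sub_comm x, abs_sub_comm (Real.exp x)]
    exact this hy hx (le_of_not_ge hyx)
  rw [abs_of_nonneg (sub_nonneg.2 hyx), abs_of_nonneg (sub_nonneg.2 (Real.exp_le_exp.2 hyx))]
  calc Real.exp a * (x - y) ≤ Real.exp y * (Real.exp (x - y) - 1) :=
        mul_le_mul (Real.exp_le_exp.2 hy) (by linarith [Real.add_one_le_exp (x - y)])
          (sub_nonneg.2 hyx) (Real.exp_pos y).le
    _ = Real.exp x - Real.exp y := by rw [mul_sub, ← Real.exp_add]; ring_nf

lemma abs_sub_div_six_le_abs_exp_sub_exp {v w : ℝ} (hv : v ≤ 2) (hw : w ≤ 2) :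
    |v - w| / 6 ≤ |Real.exp (-v / 2) - Real.exp (-w / 2)| := by
  have hexp : 1 / 3 ≤ Real.exp (-1) := by
    rw [Real.exp_neg, one_div]
    gcongr
    linarith [Real.exp_one_lt_d9]
  calc |v - w| / 6 = 1 / 3 * |-v / 2 - -w / 2| := by
        rw [show -v / 2 - -w / 2 = -(v - w) / 2 by ring, abs_div, abs_neg, abs_two]
        ring
    _ ≤ Real.exp (-1) * |-v / 2 - -w / 2| := by gcongr
    _ ≤ |Real.exp (-v / 2) - Real.exp (-w / 2)| :=
        exp_mul_abs_sub_le_abs_exp_sub_exp (by linarith) (by linarith)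

lemma min_sqrt_sum_sq_sub_le_dTV_gaussianProduct {n : ℕ} {v w : Fin n → ℝ≥0}
    (hv : ∀ i, v i ≤ 2) (hw : ∀ i, w i ≤ 2) :
    min 1 (√(∑ i, ((v i : ℝ) - w i) ^ 2) / 12) ≤
      8 * dTV (gaussianProduct v) (gaussianProduct w) := by
  have hmeans : √(∑ i, ((v i : ℝ) - w i) ^ 2) / 6 ≤
      √(∑ i, (Real.exp (-v i / 2) - Real.exp (-w i / 2)) ^ 2) := by
    rw [div_le_iff₀ (by norm_num), ← Real.sqrt_sq (show (0 : ℝ) ≤ 6 by norm_num),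
      ← Real.sqrt_mul (by positivity), Finset.sum_mul]
    gcongr with i
    rw [← mul_pow, sq_le_sq, abs_mul, abs_of_pos (show (0 : ℝ) < 6 by norm_num),
      ← div_le_iff₀ (by norm_num)]
    exact abs_sub_div_six_le_abs_exp_sub_exp (hv i) (hw i)
  calc min 1 (√(∑ i, ((v i : ℝ) - w i) ^ 2) / 12)
      ≤ min 1 (√(∑ i, (Real.exp (-v i / 2) - Real.exp (-w i / 2)) ^ 2) / 2) := by
        gcongr min 1 ?_
        linarith
    _ ≤ 8 * dTV (gaussianProduct v) (gaussianProduct w) :=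
        min_sqrt_sum_sq_sub_le_dTV_pi (fun i => ⟨gaussianReal 0 (v i), inferInstance⟩)
          (fun i => ⟨gaussianReal 0 (w i), inferInstance⟩) (f := fun _ => Real.cos)
          (fun _ => Real.measurable_cos) (fun _ => Real.abs_cos_le_one)
          (fun i => integral_cos_gaussianReal (v i)) (fun i => integral_cos_gaussianReal (w i))

end GaussianTotalVariation

section SquareIntegrableDensity

/-- `ν` has a density with respect to `μ` whose square has `μ`-integral `K`; for probability
measures `K - 1` is the `χ²`-divergence of `ν` from `μ`. -/
def HasSqDensity {α : Type*} [MeasurableSpace α] (μ ν : Measure α) (K : ℝ) : Prop :=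
  ∃ ρ : α → ℝ, Measurable ρ ∧ (∀ x, 0 ≤ ρ x) ∧ MemLp ρ 2 μ ∧ ∫ x, ρ x ^ 2 ∂μ = K ∧
    ν = μ.withDensity fun x => ENNReal.ofReal (ρ x)

lemma sq_integral_le_integral_sq {α : Type*} [MeasurableSpace α] {μ : Measure α}
    [IsProbabilityMeasure μ] {f : α → ℝ} (hf : MemLp f 2 μ) :
    (∫ x, f x ∂μ) ^ 2 ≤ ∫ x, f x ^ 2 ∂μ :=
  sub_nonneg.1 ((variance_nonneg f μ).trans_eq (variance_eq_sub hf))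

lemma integral_sq_sub_one {α : Type*} [MeasurableSpace α] {μ : Measure α}
    [IsProbabilityMeasure μ] {f : α → ℝ} (hf : MemLp f 2 μ) (hf1 : ∫ x, f x ∂μ = 1) :
    ∫ x, (f x - 1) ^ 2 ∂μ = ∫ x, f x ^ 2 ∂μ - 1 := by
  have hvar := variance_eq_sub hf
  rw [variance_eq_integral hf.aemeasurable, hf1, one_pow] at hvar
  exact hvar

lemma HasSqDensity.abs_measureReal_sub_le {α : Type*} [MeasurableSpace α] {μ ν : Measure α}
    {K : ℝ} [IsProbabilityMeasure μ] [IsProbabilityMeasure ν] (h : HasSqDensity μ ν K) {T : Set α}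
    (hT : MeasurableSet T) : |ν.real T - μ.real T| ≤ √(K - 1) := by
  obtain ⟨ρ, hρ, hρ0, hρ2, hK, hν⟩ := h
  have hint : Integrable ρ μ := hρ2.integrable one_le_two
  have hreal {A : Set α} (hA : MeasurableSet A) : ν.real A = ∫ x in A, ρ x ∂μ := by
    rw [hν, measureReal_def, withDensity_apply _ hA,
      integral_eq_lintegral_of_nonneg_ae (ae_of_all _ hρ0) hρ.aestronglyMeasurable]
  have hone : ∫ x, ρ x ∂μ = 1 := by
    rw [← setIntegral_univ, ← hreal MeasurableSet.univ, probReal_univ]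
  have hsub : MemLp (fun x => ρ x - 1) 2 μ := hρ2.sub (memLp_const 1)
  have hdiff : ν.real T - μ.real T = ∫ x, T.indicator (fun x => ρ x - 1) x ∂μ := by
    rw [integral_indicator hT, integral_sub hint.integrableOn (integrable_const _), hreal hT]
    simp
  refine Real.abs_le_sqrt ?_
  calc (ν.real T - μ.real T) ^ 2 ≤ ∫ x, T.indicator (fun x => ρ x - 1) x ^ 2 ∂μ := by
        rw [hdiff]
        exact sq_integral_le_integral_sq (hsub.indicator hT)
    _ ≤ ∫ x, (ρ x - 1) ^ 2 ∂μ := by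
        refine integral_mono (hsub.indicator hT).integrable_sq hsub.integrable_sq fun x => ?_
        rw [sq_le_sq, ← Real.norm_eq_abs, ← Real.norm_eq_abs]
        exact norm_indicator_le_norm_self _ x
    _ = K - 1 := by rw [integral_sq_sub_one hρ2 hone, hK]

section Pi

variable {ι : Type*} [Fintype ι] {E : ι → Type*} [∀ i, MeasurableSpace (E i)]
  {μ ν : ∀ i, Measure (E i)} [∀ i, IsProbabilityMeasure (μ i)]

lemma lintegral_pi_prod {f : ∀ i, E i → ℝ≥0∞} (hf : ∀ i, Measurable (f i)) :
    ∫⁻ x, ∏ i, f i (x i) ∂Measure.pi μ = ∏ i, ∫⁻ y, f i y ∂μ i := by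
  rw [lintegral_prod_eq_prod_lintegral_of_indepFun Finset.univ (fun i (x : ∀ i, E i) => f i (x i))
    (iIndepFun_pi fun i => (hf i).aemeasurable) fun i => (hf i).comp (measurable_pi_apply i)]
  exact Finset.prod_congr rfl fun i _ =>
    (measurePreserving_eval μ i).lintegral_comp (hf i)

lemma pi_eq_withDensity_prod [∀ i, SigmaFinite (ν i)] {f : ∀ i, E i → ℝ≥0∞}
    (hf : ∀ i, Measurable (f i)) (hν : ∀ i, ν i = (μ i).withDensity (f i)) :
    Measure.pi ν = (Measure.pi μ).withDensity fun x => ∏ i, f i (x i) := by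
  refine Measure.pi_eq fun s hs => ?_
  have hbox : (Set.univ.pi s).indicator (fun x => ∏ i, f i (x i)) =
      fun x => ∏ i, (s i).indicator (f i) (x i) := by
    ext x
    by_cases hx : x ∈ Set.univ.pi s
    · rw [Set.indicator_of_mem hx]
      exact Finset.prod_congr rfl fun i _ => (Set.indicator_of_mem (hx i trivial) _).symm
    · rw [Set.indicator_of_notMem hx]
      obtain ⟨i, hi⟩ : ∃ i, x i ∉ s i := by simpa [Set.mem_pi] using hx
      exact (Finset.prod_eq_zero (Finset.mem_univ i) (Set.indicator_of_notMem hi _)).symm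
  rw [withDensity_apply _ (MeasurableSet.univ_pi hs), ← lintegral_indicator
    (MeasurableSet.univ_pi hs), hbox, lintegral_pi_prod fun i => (hf i).indicator (hs i)]
  refine Finset.prod_congr rfl fun i _ => ?_
  rw [lintegral_indicator (hs i), hν, withDensity_apply _ (hs i)]

lemma HasSqDensity.pi [∀ i, SigmaFinite (ν i)] {K : ι → ℝ}
    (h : ∀ i, HasSqDensity (μ i) (ν i) (K i)) :
    HasSqDensity (Measure.pi μ) (Measure.pi ν) (∏ i, K i) := by
  choose ρ hρ hρ0 hρ2 hK hν using h
  have hmeas : Measurable fun x : ∀ i, E i => ∏ i, ρ i (x i) := by fun_prop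
  refine ⟨fun x => ∏ i, ρ i (x i), hmeas, fun x => Finset.prod_nonneg fun i _ => hρ0 i _,
    ?_, ?_, ?_⟩
  · rw [memLp_two_iff_integrable_sq hmeas.aestronglyMeasurable]
    simp only [← Finset.prod_pow]
    exact Integrable.fintype_prod_dep (f := fun i y => ρ i y ^ 2) fun i => (hρ2 i).integrable_sq
  · simp only [← Finset.prod_pow]
    rw [integral_fintype_prod_eq_prod fun i y => ρ i y ^ 2]
    simp only [hK]
  · rw [pi_eq_withDensity_prod (fun i => (hρ i).ennreal_ofReal) hν]
    simp only [ENNReal.ofReal_prod_of_nonneg fun i _ => hρ0 i _]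

end Pi

lemma gaussianPDFReal_sq (m : ℝ) {u v w : ℝ≥0} (hu : u ≠ 0) (hv : v ≠ 0) (hw : w ≠ 0)
    (h : w * (u + v) = 2 * u * v) (x : ℝ) :
    gaussianPDFReal m w x ^ 2 =
      √(u * v) / w * (gaussianPDFReal m u x * gaussianPDFReal m v x) := by
  have h' : (w : ℝ) * (u + v) = 2 * u * v := mod_cast h
  have hu' : (0 : ℝ) < u := NNReal.coe_pos.2 (pos_iff_ne_zero.2 hu)
  have : (0 : ℝ) < v := NNReal.coe_pos.2 (pos_iff_ne_zero.2 hv)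
  have : (0 : ℝ) < w := NNReal.coe_pos.2 (pos_iff_ne_zero.2 hw)
  have hexp : Real.exp (-(x - m) ^ 2 / (2 * w)) ^ 2 =
      Real.exp (-(x - m) ^ 2 / (2 * u)) * Real.exp (-(x - m) ^ 2 / (2 * v)) := by
    rw [← Real.exp_add, ← Real.exp_nat_mul]
    congr 1
    push_cast
    field_simp
    linear_combination ((x - m) ^ 2) * h'
  have hnorm : √(2 * Real.pi * w) ^ 2 * √(u * v) =
      w * (√(2 * Real.pi * u) * √(2 * Real.pi * v)) := by
    rw [Real.sq_sqrt (by positivity), Real.sqrt_mul hu'.le,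
      Real.sqrt_mul (show 0 ≤ 2 * Real.pi by positivity) u,
      Real.sqrt_mul (show 0 ≤ 2 * Real.pi by positivity) v]
    linear_combination -w * √u * √v * Real.mul_self_sqrt (show 0 ≤ 2 * Real.pi by positivity)
  simp only [gaussianPDFReal, mul_pow, hexp]
  have := Real.sqrt_pos.2 (show 0 < 2 * Real.pi * u by positivity)
  have := Real.sqrt_pos.2 (show 0 < 2 * Real.pi * v by positivity)
  have := Real.sqrt_pos.2 (show 0 < 2 * Real.pi * w by positivity)
  field_simp
  linear_combination -hnorm

lemma hasSqDensity_gaussianReal_of_mul_add_eq (m : ℝ) {u v w : ℝ≥0} (hu : u ≠ 0) (hv : v ≠ 0)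
    (hw : w ≠ 0) (h : w * (u + v) = 2 * u * v) :
    HasSqDensity (gaussianReal m v) (gaussianReal m w) (√(u * v) / w) := by
  have hpos (x) : 0 < gaussianPDFReal m v x := gaussianPDFReal_pos m v x hv
  have hmeas : Measurable fun x => gaussianPDFReal m w x / gaussianPDFReal m v x := by fun_prop
  have hsq (x) : gaussianPDFReal m v x * (gaussianPDFReal m w x / gaussianPDFReal m v x) ^ 2 =
      √(u * v) / w * gaussianPDFReal m u x := by
    rw [div_pow, gaussianPDFReal_sq m hu hv hw h]
    field_simp [(hpos x).ne']
  have hvol := gaussianReal_of_var_ne_zero m hv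
  refine ⟨_, hmeas, fun x => div_nonneg (gaussianPDFReal_nonneg _ _ _) (hpos x).le, ?_, ?_, ?_⟩
  · rw [memLp_two_iff_integrable_sq hmeas.aestronglyMeasurable, hvol,
      integrable_withDensity_iff_integrable_smul' (measurable_gaussianPDF m v)
        (ae_of_all _ fun x => gaussianPDF_lt_top)]
    simp only [toReal_gaussianPDF, smul_eq_mul, hsq]
    exact (integrable_gaussianPDFReal m u).const_mul _
  · rw [integral_gaussianReal_eq_integral_smul hv]
    simp only [smul_eq_mul, hsq]
    rw [integral_const_mul, integral_gaussianPDFReal_eq_one m hu, mul_one]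
  · rw [hvol, gaussianReal_of_var_ne_zero m hw,
      ← withDensity_mul _ (measurable_gaussianPDF m v) hmeas.ennreal_ofReal]
    congr 1 with x
    rw [Pi.mul_apply, gaussianPDF, gaussianPDF, ← ENNReal.ofReal_mul (hpos x).le,
      mul_div_cancel₀ _ (hpos x).ne']

lemma hasSqDensity_gaussianReal (m : ℝ) {v w : ℝ≥0} (hw : 0 < w) (hwv : w < 2 * v) :
    HasSqDensity (gaussianReal m v) (gaussianReal m w) (√(1 - ((w : ℝ) / v - 1) ^ 2))⁻¹ := by
  have hv : 0 < v := pos_of_mul_pos_right (hw.trans hwv) zero_le_two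
  obtain ⟨d, hd0, hd⟩ := exists_pos_add_of_lt' hwv
  have hd' : (w : ℝ) + d = 2 * v := mod_cast hd
  -- `u` solves `1 / u + 1 / v = 2 / w`, so that `p_w ^ 2 / p_v` is proportional to `p_u`.
  convert hasSqDensity_gaussianReal_of_mul_add_eq m (u := v * w / d) (by positivity) hv.ne'
    hw.ne' ?_ using 1
  · have hd_eq : 1 - ((w : ℝ) / v - 1) ^ 2 = w * d / v ^ 2 := by
      rw [eq_sub_of_add_eq' hd']
      field_simp
      ring
    rw [hd_eq, ← Real.sqrt_inv, eq_div_iff (NNReal.coe_ne_zero.2 hw.ne')]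
    nth_rewrite 2 [← Real.sqrt_sq w.coe_nonneg]
    rw [← Real.sqrt_mul (by positivity)]
    push_cast
    congr 1
    field_simp
  · field_simp
    linear_combination hd

lemma one_sub_sum_le_prod_one_sub {ι : Type*} (s : Finset ι) {y : ι → ℝ}
    (hy0 : ∀ i ∈ s, 0 ≤ y i) (hy1 : ∀ i ∈ s, y i ≤ 1) :
    1 - ∑ i ∈ s, y i ≤ ∏ i ∈ s, (1 - y i) := by
  induction s using Finset.cons_induction with
  | empty => simp
  | cons j s hj ih =>
    rw [Finset.forall_mem_cons] at hy0 hy1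
    rw [Finset.sum_cons, Finset.prod_cons]
    have hsum : 0 ≤ ∑ i ∈ s, y i := Finset.sum_nonneg hy0.2
    nlinarith [ih hy0.2 hy1.2]

lemma inv_sqrt_one_sub_le {s : ℝ} (hs0 : 0 ≤ s) (hs : s ≤ 1 / 2) : (√(1 - s))⁻¹ ≤ 1 + s := by
  rw [← Real.sqrt_inv]
  refine Real.sqrt_le_iff.2 ⟨by linarith, ?_⟩
  rw [inv_le_iff_one_le_mul₀ (by linarith)]
  nlinarith [mul_nonneg hs0 (show 0 ≤ 1 - s - s ^ 2 by nlinarith)]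

lemma prod_inv_sqrt_one_sub_le {ι : Type*} (s : Finset ι) {y : ι → ℝ}
    (hy0 : ∀ i ∈ s, 0 ≤ y i) (hsum : ∑ i ∈ s, y i ≤ 1 / 2) :
    ∏ i ∈ s, (√(1 - y i))⁻¹ ≤ 1 + ∑ i ∈ s, y i := by
  have hy1 (i) (hi : i ∈ s) : y i ≤ 1 := by
    linarith [Finset.single_le_sum hy0 hi]
  calc ∏ i ∈ s, (√(1 - y i))⁻¹ = (√(∏ i ∈ s, (1 - y i)))⁻¹ := by
        rw [Finset.prod_inv_distrib, Real.sqrt_prod _ fun i hi => sub_nonneg.2 (hy1 i hi)]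
    _ ≤ (√(1 - ∑ i ∈ s, y i))⁻¹ := by
        have : 0 < 1 - ∑ i ∈ s, y i := by linarith
        gcongr
        exact one_sub_sum_le_prod_one_sub s hy0 hy1
    _ ≤ 1 + ∑ i ∈ s, y i := inv_sqrt_one_sub_le (Finset.sum_nonneg hy0) hsum

instance isProbabilityMeasure_iidSamples {α : Type*} [MeasurableSpace α] (m : ℕ)
    (P : ProbabilityMeasure α) :
    IsProbabilityMeasure (iidSamples m P) :=
  inferInstanceAs (IsProbabilityMeasure (Measure.pi fun _ => (P : Measure α)))

lemma abs_measureReal_iidSamples_gaussianProduct_sub_le {m n : ℕ} {v w : Fin n → ℝ≥0}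
    (hw : ∀ i, 0 < w i) (hwv : ∀ i, w i < 2 * v i)
    (hm : (m : ℝ) * ∑ i, ((w i : ℝ) / v i - 1) ^ 2 ≤ 1 / 2) {T : Set (Fin m → Fin n → ℝ)}
    (hT : MeasurableSet T) :
    |(iidSamples m (gaussianProduct w)).real T - (iidSamples m (gaussianProduct v)).real T| ≤
      √((m : ℝ) * ∑ i, ((w i : ℝ) / v i - 1) ^ 2) := by
  have hdensity : HasSqDensity (iidSamples m (gaussianProduct v))
      (iidSamples m (gaussianProduct w))
      (∏ _ : Fin m, ∏ i, (√(1 - ((w i : ℝ) / v i - 1) ^ 2))⁻¹) :=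
    HasSqDensity.pi fun _ => HasSqDensity.pi fun i => hasSqDensity_gaussianReal 0 (hw i) (hwv i)
  have hsum : ∑ p : Fin m × Fin n, ((w p.2 : ℝ) / v p.2 - 1) ^ 2 =
      (m : ℝ) * ∑ i, ((w i : ℝ) / v i - 1) ^ 2 := by
    simp [Fintype.sum_prod_type]
  refine (hdensity.abs_measureReal_sub_le hT).trans (Real.sqrt_le_sqrt ?_)
  rw [← Fintype.prod_prod_type', ← hsum]
  linarith [prod_inv_sqrt_one_sub_le Finset.univ (y := fun p : Fin m × Fin n =>
    ((w p.2 : ℝ) / v p.2 - 1) ^ 2) (fun p _ => sq_nonneg _) (hsum.trans_le hm)]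

end SquareIntegrableDensity

section Assouad

variable {Ω ι : Type*} [MeasurableSpace Ω] [Fintype ι]

lemma measurable_hammingDist {g : Ω → ι → Bool} (hg : Measurable g) (θ : ι → Bool) :
    Measurable fun x => (hammingDist (g x) θ : ℝ) :=
  (Measurable.of_discrete (f := fun y : ι → Bool => (hammingDist y θ : ℝ))).comp hg

lemma integral_hammingDist (μ : Measure Ω) [IsFiniteMeasure μ] {g : Ω → ι → Bool}
    (hg : Measurable g) (θ : ι → Bool) :
    ∫ x, (hammingDist (g x) θ : ℝ) ∂μ = ∑ i, μ.real {x | g x i ≠ θ i} := by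
  have hne (i) : MeasurableSet {x | g x i ≠ θ i} :=
    (measurable_pi_apply i).comp hg (measurableSet_singleton (θ i)).compl
  calc ∫ x, (hammingDist (g x) θ : ℝ) ∂μ
      = ∫ x, ∑ i, {x | g x i ≠ θ i}.indicator 1 x ∂μ := by
        simp only [hammingDist, Set.indicator_apply, Set.mem_ofPred_eq, Pi.one_apply,
          Finset.sum_boole]
    _ = ∑ i, μ.real {x | g x i ≠ θ i} := by
        rw [integral_finsetSum _ fun i _ => (integrable_const 1).indicator (hne i)]
        simp only [integral_indicator_one (hne _)]

lemma integral_hammingDist_le (μ : Measure Ω) [IsProbabilityMeasure μ] {g : Ω → ι → Bool}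
    (hg : Measurable g) (θ : ι → Bool) (κ : ℝ) :
    ∫ x, (hammingDist (g x) θ : ℝ) ∂μ ≤
      Fintype.card ι *
        (1 - (1 - κ) * μ.real {x | (hammingDist (g x) θ : ℝ) ≤ κ * Fintype.card ι}) := by
  set S : Set Ω := {x | (hammingDist (g x) θ : ℝ) ≤ κ * Fintype.card ι}
  have hmeas := measurable_hammingDist hg θ
  have hS : MeasurableSet S := measurableSet_le hmeas measurable_const
  have hcard (x) : (hammingDist (g x) θ : ℝ) ≤ Fintype.card ι :=
    mod_cast hammingDist_le_card_fintype
  have hindicator : Integrable (S.indicator fun _ => (1 - κ) * Fintype.card ι) μ :=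
    (integrable_const _).indicator hS
  calc ∫ x, (hammingDist (g x) θ : ℝ) ∂μ
      ≤ ∫ x, (Fintype.card ι - S.indicator (fun _ => (1 - κ) * Fintype.card ι) x) ∂μ := by
        refine integral_mono (Integrable.of_bound hmeas.aestronglyMeasurable (Fintype.card ι)
          (ae_of_all _ fun x => by simpa using hcard x))
          ((integrable_const _).sub hindicator) fun x => ?_
        by_cases hx : x ∈ S
        · simp only [Set.indicator_of_mem hx]
          linarith [show (hammingDist (g x) θ : ℝ) ≤ κ * Fintype.card ι from hx]
        · simpa only [Set.indicator_of_notMem hx, sub_zero] using hcard x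
    _ = Fintype.card ι * (1 - (1 - κ) * μ.real S) := by
        rw [integral_sub (integrable_const _) hindicator, integral_indicator_const _ hS]
        simp only [integral_const, probReal_univ, smul_eq_mul]
        ring

variable (μ : (ι → Bool) → Measure Ω) [∀ θ, IsProbabilityMeasure (μ θ)] {t : ℝ}

lemma sum_le_sum_measureReal_ne [DecidableEq ι]
    (hclose : ∀ θ θ', hammingDist θ θ' = 1 → ∀ T, MeasurableSet T →
      |(μ θ).real T - (μ θ').real T| ≤ t)
    (i : ι) {b : Ω → Bool} (hb : Measurable b) :
    ∑ _ : ι → Bool, (1 - t) / 2 ≤ ∑ θ, (μ θ).real {x | b x ≠ θ i} := by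
  let flip (θ : ι → Bool) : ι → Bool := Function.update θ i (!θ i)
  have hflip : Function.Involutive flip := fun θ => by simp [flip]
  have hpair (θ) : 1 - t ≤ (μ θ).real {x | b x ≠ θ i} + (μ (flip θ)).real {x | b x ≠ flip θ i} := by
    have hne : MeasurableSet {x | b x ≠ θ i} := hb (measurableSet_singleton (θ i)).compl
    have hcompl : {x | b x ≠ flip θ i} = {x | b x ≠ θ i}ᶜ := by ext x; simp [flip]
    have hdist : hammingDist (flip θ) θ = 1 := by
      have : ({j | flip θ j ≠ θ j} : Finset ι) = {i} := by
        ext j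
        by_cases h : j = i <;> simp [flip, h]
      rw [hammingDist, this, Finset.card_singleton]
    rw [hcompl, probReal_compl_eq_one_sub hne]
    linarith [le_of_abs_le (hclose _ _ hdist _ hne)]
  have hsum : ∑ θ, (μ (flip θ)).real {x | b x ≠ flip θ i} = ∑ θ, (μ θ).real {x | b x ≠ θ i} :=
    Equiv.sum_comp hflip.toPerm fun θ => (μ θ).real {x | b x ≠ θ i}
  calc ∑ _ : ι → Bool, (1 - t) / 2
      ≤ ∑ θ, ((μ θ).real {x | b x ≠ θ i} + (μ (flip θ)).real {x | b x ≠ flip θ i}) / 2 := by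
        gcongr with θ
        exact hpair θ
    _ = ∑ θ, (μ θ).real {x | b x ≠ θ i} := by
        rw [← Finset.sum_div, Finset.sum_add_distrib, hsum, add_self_div_two]

lemma exists_le_integral_hammingDist
    (hclose : ∀ θ θ', hammingDist θ θ' = 1 → ∀ T, MeasurableSet T →
      |(μ θ).real T - (μ θ').real T| ≤ t)
    {g : Ω → ι → Bool} (hg : Measurable g) :
    ∃ θ, Fintype.card ι * ((1 - t) / 2) ≤ ∫ x, (hammingDist (g x) θ : ℝ) ∂μ θ := by
  classical
  have hbit (i) := sum_le_sum_measureReal_ne μ hclose i ((measurable_pi_apply i).comp hg)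
  have hsum : ∑ _ : ι → Bool, Fintype.card ι * ((1 - t) / 2) ≤
      ∑ θ, ∫ x, (hammingDist (g x) θ : ℝ) ∂μ θ := by
    simp only [integral_hammingDist _ hg]
    rw [Finset.sum_comm, ← Finset.mul_sum, ← nsmul_eq_mul, ← Finset.card_univ,
      ← Finset.sum_const]
    exact Finset.sum_le_sum fun i _ => hbit i
  obtain ⟨θ, -, hθ⟩ := Finset.exists_le_of_sum_le Finset.univ_nonempty hsum
  exact ⟨θ, hθ⟩

lemma exists_mul_measureReal_dTV_le_le {α : Type*} [MeasurableSpace α] [Nonempty ι]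
    (hclose : ∀ θ θ', hammingDist θ θ' = 1 → ∀ T, MeasurableSet T →
      |(μ θ).real T - (μ θ').real T| ≤ t)
    (P : (ι → Bool) → ProbabilityMeasure α) {r κ : ℝ} (hκ : κ ≤ 1)
    (hsep : ∀ θ θ', dTV (P θ) (P θ') ≤ 2 * r → (hammingDist θ θ' : ℝ) ≤ κ * Fintype.card ι)
    {e : Ω → ProbabilityMeasure α} (he : Measurable e) :
    ∃ θ, (1 - κ) * (μ θ).real {x | dTV (P θ) (e x) ≤ r} ≤ (1 + t) / 2 := by
  obtain ⟨g, hg, hdecode⟩ := exists_measurable_decoder P he r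
  obtain ⟨θ, hθ⟩ := exists_le_integral_hammingDist μ hclose hg
  refine ⟨θ, ?_⟩
  have hle := le_of_mul_le_mul_left (hθ.trans (integral_hammingDist_le (μ θ) hg θ κ))
    (by exact_mod_cast Fintype.card_pos)
  have hmono : (μ θ).real {x | dTV (P θ) (e x) ≤ r} ≤
      (μ θ).real {x | (hammingDist (g x) θ : ℝ) ≤ κ * Fintype.card ι} :=
    measureReal_mono fun x hx => by
      rw [Set.mem_ofPred_eq, hammingDist_comm]
      exact hsep θ (g x) (hdecode θ x hx)
  linarith [mul_le_mul_of_nonneg_left hmono (sub_nonneg.2 hκ)]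

end Assouad

section VarianceCube

variable {m n : ℕ} {δ : ℝ≥0}

/-- The variances `1` and `1 + δ`, chosen coordinatewise by the bits of `θ`; the corresponding
Gaussian products form the hypercube of hypotheses on which the lower bound is proved. -/
def cubeVariance (δ : ℝ≥0) (θ : Fin n → Bool) (i : Fin n) : ℝ≥0 :=
  if θ i then 1 + δ else 1

lemma one_le_cubeVariance (δ : ℝ≥0) (θ : Fin n → Bool) (i : Fin n) : 1 ≤ cubeVariance δ θ i := by
  unfold cubeVariance
  split <;> simp

lemma cubeVariance_le (δ : ℝ≥0) (θ : Fin n → Bool) (i : Fin n) : cubeVariance δ θ i ≤ 1 + δ := by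
  unfold cubeVariance
  split <;> simp

lemma sum_sq_cubeVariance_sub (δ : ℝ≥0) (θ θ' : Fin n → Bool) :
    ∑ i, ((cubeVariance δ θ i : ℝ) - cubeVariance δ θ' i) ^ 2 = hammingDist θ θ' * δ ^ 2 := by
  have hterm (i) : ((cubeVariance δ θ i : ℝ) - cubeVariance δ θ' i) ^ 2 =
      if θ i ≠ θ' i then (δ : ℝ) ^ 2 else 0 := by
    cases h : θ i <;> cases h' : θ' i <;> simp [cubeVariance, h, h']
  simp only [hterm, Finset.sum_ite, Finset.sum_const, nsmul_eq_mul, smul_zero, add_zero,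
    hammingDist]

lemma hammingDist_le_of_dTV_le (hδ0 : 0 < δ) (hδ1 : δ ≤ 1) (hδn : √n * δ ≤ 1)
    {θ θ' : Fin n → Bool}
    (h : dTV (gaussianProduct (cubeVariance δ θ)) (gaussianProduct (cubeVariance δ θ')) ≤
      √n * δ / 300) :
    (hammingDist θ θ' : ℝ) ≤ 1 / 9 * n := by
  have hle_two (θ : Fin n → Bool) (i) : cubeVariance δ θ i ≤ 2 :=
    (cubeVariance_le δ θ i).trans <| by
      rw [← one_add_one_eq_two]
      gcongr
  have hlow := min_sqrt_sum_sq_sub_le_dTV_gaussianProduct (hle_two θ) (hle_two θ')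
  rw [sum_sq_cubeVariance_sub, Real.sqrt_mul (Nat.cast_nonneg _), Real.sqrt_sq δ.coe_nonneg]
    at hlow
  have hsqrt : √(hammingDist θ θ' : ℝ) ≤ 8 / 25 * √n := by
    refine le_of_mul_le_mul_right ?_ (NNReal.coe_pos.2 hδ0)
    obtain hone | hdist := min_le_iff.1 hlow <;> linarith
  calc (hammingDist θ θ' : ℝ) = √(hammingDist θ θ' : ℝ) ^ 2 := (Real.sq_sqrt (by positivity)).symm
    _ ≤ (8 / 25 * √n) ^ 2 := by gcongr
    _ = 64 / 625 * n := by rw [mul_pow, Real.sq_sqrt (Nat.cast_nonneg n)]; norm_num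
    _ ≤ 1 / 9 * n := by linarith [Nat.cast_nonneg (α := ℝ) n]

lemma abs_measureReal_iidSamples_cubeVariance_sub_le (hδ1 : δ < 1)
    (hm : (m : ℝ) * δ ^ 2 ≤ 1 / 2) {θ θ' : Fin n → Bool} (hθ : hammingDist θ θ' = 1)
    {T : Set (Fin m → Fin n → ℝ)} (hT : MeasurableSet T) :
    |(iidSamples m (gaussianProduct (cubeVariance δ θ))).real T -
      (iidSamples m (gaussianProduct (cubeVariance δ θ'))).real T| ≤ √(m * δ ^ 2) := by
  have hratio : ∑ i, ((cubeVariance δ θ i : ℝ) / cubeVariance δ θ' i - 1) ^ 2 ≤ (δ : ℝ) ^ 2 := by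
    calc ∑ i, ((cubeVariance δ θ i : ℝ) / cubeVariance δ θ' i - 1) ^ 2
        ≤ ∑ i, ((cubeVariance δ θ i : ℝ) - cubeVariance δ θ' i) ^ 2 := by
          gcongr ∑ i, ?_ with i
          have hone : (1 : ℝ) ≤ cubeVariance δ θ' i := one_le_cubeVariance δ θ' i
          rw [div_sub_one (by positivity), div_pow]
          exact div_le_self (sq_nonneg _) (one_le_pow₀ hone)
      _ = δ ^ 2 := by rw [sum_sq_cubeVariance_sub, hθ, Nat.cast_one, one_mul]
  have hmul := mul_le_mul_of_nonneg_left hratio (Nat.cast_nonneg (α := ℝ) m)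
  refine (abs_measureReal_iidSamples_gaussianProduct_sub_le
    (fun i => one_pos.trans_le (one_le_cubeVariance δ θ i)) (fun i => ?_) (hmul.trans hm) hT).trans
    (Real.sqrt_le_sqrt hmul)
  calc cubeVariance δ θ i ≤ 1 + δ := cubeVariance_le δ θ i
    _ < 2 * 1 := by rw [two_mul]; gcongr
    _ ≤ 2 * cubeVariance δ θ' i := by gcongr; exact one_le_cubeVariance δ θ' i

lemma exists_measureReal_dTV_cubeVariance_lt [NeZero n] (hδ0 : 0 < δ) (hδ1 : δ < 1)
    (hδn : √n * δ ≤ 1) (hm : (m : ℝ) * δ ^ 2 ≤ 1 / 36)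
    {e : (Fin m → Fin n → ℝ) → ProbabilityMeasure (Fin n → ℝ)} (he : Measurable e) :
    ∃ θ : Fin n → Bool, (iidSamples m (gaussianProduct (cubeVariance δ θ))).real
      {x | dTV (gaussianProduct (cubeVariance δ θ)) (e x) ≤ √n * δ / 600} < 2 / 3 := by
  have hsqrt : √(m * δ ^ 2) ≤ (1 / 6 : ℝ) := Real.sqrt_le_iff.2 ⟨by norm_num, by linarith⟩
  -- `κ` and the bound on `m * δ ^ 2` are such that `(1 - κ) * (2 / 3) > (1 + 1 / 6) / 2`.
  obtain ⟨θ, hθ⟩ := exists_mul_measureReal_dTV_le_le (κ := 1 / 9) (r := √n * δ / 600)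
    (fun θ : Fin n → Bool => iidSamples m (gaussianProduct (cubeVariance δ θ)))
    (fun θ θ' hdist T hT =>
      abs_measureReal_iidSamples_cubeVariance_sub_le hδ1 (by linarith) hdist hT)
    (fun θ => gaussianProduct (cubeVariance δ θ)) (by norm_num)
    (fun θ θ' hdTV => by
      rw [Fintype.card_fin]
      exact hammingDist_le_of_dTV_le hδ0 hδ1.le hδn (by linarith)) he
  exact ⟨θ, by linarith⟩

end VarianceCube

theorem stmt_16 :
    ∃ c c' : ℝ, 0 < c ∧ 0 < c' ∧
      ∀ (n : ℕ), 1 ≤ n → ∀ (ε : ℝ), 0 < ε → ε < 1 →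
        ∀ (m : ℕ) (estimator : (Fin m → Fin n → ℝ) → ProbabilityMeasure (Fin n → ℝ)),
          Measurable estimator →
          (∀ v : Fin n → ℝ≥0, (∀ i, 0 < v i) →
            (2 / 3 : ℝ≥0∞) ≤
              iidSamples m (gaussianProduct v)
                {x | dTV (gaussianProduct v) (estimator x) ≤ c * ε}) →
          c' * (n : ℝ) / ε ^ 2 ≤ (m : ℝ) := by
  refine ⟨1 / 600, 1 / 36, by norm_num, by norm_num,
    fun n hn ε hε0 hε1 m estimator hest hsucc => ?_⟩
  have : NeZero n := ⟨by lia⟩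
  have hn1 : (1 : ℝ) ≤ √n := Real.one_le_sqrt.2 (mod_cast hn)
  let δ : ℝ≥0 := ⟨ε / √n, by positivity⟩
  have hδ : √n * δ = ε := mul_div_cancel₀ ε (by positivity)
  have hδ0 : 0 < δ := NNReal.coe_pos.1 (show 0 < ε / √n by positivity)
  have hδ1 : δ < 1 := NNReal.coe_lt_coe.1 ((div_le_self hε0.le hn1).trans_lt hε1)
  by_contra! hm
  have hmδ : (m : ℝ) * δ ^ 2 ≤ 1 / 36 := by
    rw [← hδ, mul_pow, Real.sq_sqrt (Nat.cast_nonneg n), lt_div_iff₀ (by positivity)] at hm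
    exact (lt_of_mul_lt_mul_left (by linarith) (Nat.cast_nonneg (α := ℝ) n)).le
  obtain ⟨θ, hθ⟩ :=
    exists_measureReal_dTV_cubeVariance_lt hδ0 hδ1 (hδ.trans_le hε1.le) hmδ hest
  have hge := ENNReal.toReal_mono (measure_ne_top _ _)
    (hsucc (cubeVariance δ θ) fun i => one_pos.trans_le (one_le_cubeVariance δ θ i))
  rw [hδ, measureReal_def, div_eq_inv_mul, ← one_div] at hθ
  exact hθ.not_ge (by simpa using hge)
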